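/- Let a ≥ b ≥ k ≥ 1. Then φ_k = Σ_{t=0}^{k} (−1)^t C(b−t,k−t)·Φ_t and ψ_k = Σ_{t=1}^{k} (−1)^{t−1} C(b−t,k−t)·Φ_t, as linear maps Λ^a⊗Λ^b → Λ^a⊗Λ^b. -/

import Mathlib

open TensorProduct

set_option synthInstance.maxHeartbeats 1000000
set_option maxSynthPendingDepth 3
set_option maxHeartbeats 1000000

noncomputable section

namespace MMS

variable (K : Type) [Field K] [CharZero K] (n : ℕ)

/-- `V = K^n`, the natural module of `G = GL(n,K)`. -/
abbrev V : Type := Fin n → K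

/-- `Λ^p`, the `p`-th exterior power of `V`. -/
abbrev Lam (p : ℕ) : Type := ⋀[K]^p (V K n)

/-- The wedge `v_1 ∧ ⋯ ∧ v_p ∈ Λ^p`. -/
def wedge {p : ℕ} (v : Fin p → V K n) : Lam K n p :=
  ⟨ExteriorAlgebra.ιMulti K p v, ExteriorAlgebra.ιMulti_range K p (Set.mem_range_self v)⟩

/-- Transport along an equality of degrees. -/
def ecast {p q : ℕ} (h : p = q) : Lam K n p ≃ₗ[K] Lam K n q :=
  h ▸ LinearEquiv.refl K (Lam K n p)

/-- `m` is the wedge multiplication map `Λ^p ⊗ Λ^q → Λ^{p+q}`. -/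
def IsMulMap (p q : ℕ) (m : Lam K n p ⊗[K] Lam K n q →ₗ[K] Lam K n (p+q)) : Prop :=
  ∀ (v : Fin p → V K n) (w : Fin q → V K n),
    m (wedge K n v ⊗ₜ[K] wedge K n w) = wedge K n (Fin.append v w)

/-- The set of `(p,q)`-shuffles: permutations `σ` of `{1, …, p+q}` which are strictly
increasing on the first `p` and on the last `q` indices. -/
def shuffles (p q : ℕ) : Finset (Equiv.Perm (Fin (p+q))) :=
  Finset.univ.filter (fun σ =>
    (∀ i j : Fin (p+q), i < j → (j : ℕ) < p → σ i < σ j) ∧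
    (∀ i j : Fin (p+q), i < j → p ≤ (i : ℕ) → σ i < σ j))

/-- `D` is the component `Δ_{p,q} : Λ^{p+q} → Λ^p ⊗ Λ^q` of the comultiplication, i.e.
`Δ_{p,q}(v_1 ∧ ⋯ ∧ v_{p+q}) = Σ_σ sgn(σ) (v_{σ(1)} ∧ ⋯ ∧ v_{σ(p)}) ⊗ (v_{σ(p+1)} ∧ ⋯ ∧ v_{σ(p+q)})`,
the sum being over all `(p,q)`-shuffles. -/
def IsComulMap (p q : ℕ) (D : Lam K n (p+q) →ₗ[K] Lam K n p ⊗[K] Lam K n q) : Prop :=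
  ∀ v : Fin (p+q) → V K n,
    D (wedge K n v) =
      ∑ σ ∈ shuffles p q,
        (Equiv.Perm.sign σ : ℤ) •
          (wedge K n (fun i => v (σ (Fin.castAdd q i))) ⊗ₜ[K]
            wedge K n (fun i => v (σ (Fin.natAdd p i))))

variable (mf : ∀ p q : ℕ, Lam K n p ⊗[K] Lam K n q →ₗ[K] Lam K n (p+q))
variable (Df : ∀ p q : ℕ, Lam K n (p+q) →ₗ[K] Lam K n p ⊗[K] Lam K n q)

/-- The map `δ_t = (m ⊗ 1) ∘ (1 ⊗ Δ_{t,b-t}) : Λ^a ⊗ Λ^b → Λ^{a+t} ⊗ Λ^{b-t}`. -/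
def deltaMap (a b t : ℕ) (ht : t ≤ b) :
    Lam K n a ⊗[K] Lam K n b →ₗ[K] Lam K n (a+t) ⊗[K] Lam K n (b-t) :=
  (TensorProduct.map (mf a t) LinearMap.id)
    ∘ₗ (TensorProduct.assoc K (Lam K n a) (Lam K n t) (Lam K n (b-t))).symm.toLinearMap
    ∘ₗ (TensorProduct.map LinearMap.id
        ((Df t (b-t)) ∘ₗ (ecast K n (by omega : b = t + (b-t))).toLinearMap))

/-- The map `θ_t = (1 ⊗ m) ∘ (Δ_{a-t,t} ⊗ 1) : Λ^a ⊗ Λ^b → Λ^{a-t} ⊗ Λ^{b+t}`. -/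
def thetaMap (a b t : ℕ) (ht : t ≤ a) :
    Lam K n a ⊗[K] Lam K n b →ₗ[K] Lam K n (a-t) ⊗[K] Lam K n (b+t) :=
  (TensorProduct.map LinearMap.id
      ((ecast K n (by omega : t + b = b + t)).toLinearMap ∘ₗ mf t b))
    ∘ₗ (TensorProduct.assoc K (Lam K n (a-t)) (Lam K n t) (Lam K n b)).toLinearMap
    ∘ₗ (TensorProduct.map
        ((Df (a-t) t) ∘ₗ (ecast K n (by omega : a = (a-t) + t)).toLinearMap) LinearMap.id)

/-- The map `Φ_t = θ_t ∘ δ_t : Λ^a ⊗ Λ^b → Λ^a ⊗ Λ^b`. -/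
def PhiMap (a b t : ℕ) (hta : t ≤ a) (htb : t ≤ b) :
    Lam K n a ⊗[K] Lam K n b →ₗ[K] Lam K n a ⊗[K] Lam K n b :=
  (TensorProduct.congr (ecast K n (by omega : a + t - t = a))
      (ecast K n (by omega : b - t + t = b))).toLinearMap
    ∘ₗ thetaMap K n mf Df (a+t) (b-t) t (by omega)
    ∘ₗ deltaMap K n mf Df a b t htb

/-- The map `Φ_t`, extended by `0` to all `t`. -/
def PhiMap' (a b t : ℕ) :
    Lam K n a ⊗[K] Lam K n b →ₗ[K] Lam K n a ⊗[K] Lam K n b :=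
  if h : t ≤ a ∧ t ≤ b then PhiMap K n mf Df a b t h.1 h.2 else 0

/-- The map `θ_1 : Λ^{a+1} ⊗ Λ^{b-1} → Λ^a ⊗ Λ^b` (for `b ≥ 1`). -/
def theta1 (a b : ℕ) (hb : 1 ≤ b) :
    Lam K n (a+1) ⊗[K] Lam K n (b-1) →ₗ[K] Lam K n a ⊗[K] Lam K n b :=
  (TensorProduct.congr (ecast K n (by omega : a + 1 - 1 = a))
      (ecast K n (by omega : b - 1 + 1 = b))).toLinearMap
    ∘ₗ thetaMap K n mf Df (a+1) (b-1) 1 (by omega)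

/-- The submodule of relations defining the Schur module `L_{(a,b)}`: the image of
`θ_1` if `b ≥ 1`, and `0` if `b = 0`. -/
def schurRel (a b : ℕ) : Submodule K (Lam K n a ⊗[K] Lam K n b) :=
  if hb : 1 ≤ b then LinearMap.range (theta1 K n mf Df a b hb) else ⊥

/-- The Schur module `L_{(a,b)}`, realized as the cokernel of `θ_1` (in characteristic zero). -/
abbrev SchurL (a b : ℕ) : Type :=
  (Lam K n a ⊗[K] Lam K n b) ⧸ schurRel K n mf Df a b

/-- The projection `π_{(a,b)} : Λ^a ⊗ Λ^b → L_{(a,b)}`. -/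
def schurProj (a b : ℕ) : Lam K n a ⊗[K] Lam K n b →ₗ[K] SchurL K n mf Df a b :=
  (schurRel K n mf Df a b).mkQ

/-- The coefficient `c_t(a,b,i) = C(i,t)·C(a-b+t+i,t)`. -/
def cCoef (a b t i : ℕ) : ℕ := (i.choose t) * ((a-b+t+i).choose t)

/-- The group `G = GL(n,K)`. -/
abbrev GLn : Type := Matrix.GeneralLinearGroup (Fin n) K

/-- `rho` is the family of natural actions of `G = GL(n,K)` on the exterior powers `Λ^p`
of the natural module `V = K^n`. -/
def IsExtAction (rho : ∀ p : ℕ, GLn K n → (Lam K n p →ₗ[K] Lam K n p)) : Prop :=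
  ∀ (p : ℕ) (g : GLn K n) (v : Fin p → V K n),
    rho p g (wedge K n v) =
      wedge K n (fun i => Matrix.toLin' (g : Matrix (Fin n) (Fin n) K) (v i))

/-- The action of `g ∈ GL(n,K)` on `Λ^a ⊗ Λ^b`. -/
def rhoT (rho : ∀ p : ℕ, GLn K n → (Lam K n p →ₗ[K] Lam K n p)) (a b : ℕ) (g : GLn K n) :
    Lam K n a ⊗[K] Lam K n b →ₗ[K] Lam K n a ⊗[K] Lam K n b :=
  TensorProduct.map (rho a g) (rho b g)

/-- The quotients `M₁ ⧸ N₁` and `M₂ ⧸ N₂` are isomorphic as representations, with respect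
to the given actions `ρ₁, ρ₂` on `M₁` and `M₂` (which descend to the quotients). -/
def IsQuotIso {G' : Type} {M₁ M₂ : Type} [AddCommGroup M₁] [Module K M₁]
    [AddCommGroup M₂] [Module K M₂]
    (N₁ : Submodule K M₁) (N₂ : Submodule K M₂)
    (ρ₁ : G' → M₁ →ₗ[K] M₁) (ρ₂ : G' → M₂ →ₗ[K] M₂) : Prop :=
  ∃ e : (M₁ ⧸ N₁) ≃ₗ[K] (M₂ ⧸ N₂),
    ∀ (g : G') (x : M₁) (y : M₂),
      e (Submodule.Quotient.mk x) = Submodule.Quotient.mk y →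
      e (Submodule.Quotient.mk (ρ₁ g x)) = Submodule.Quotient.mk (ρ₂ g y)

/-- The "multiply in pairs" map
`(Λ^{p₁} ⊗ Λ^{q₁}) ⊗ (Λ^{p₂} ⊗ Λ^{q₂}) → Λ^{p₁+p₂} ⊗ Λ^{q₁+q₂}`. -/
def pairMul (p₁ q₁ p₂ q₂ : ℕ) :
    (Lam K n p₁ ⊗[K] Lam K n q₁) ⊗[K] (Lam K n p₂ ⊗[K] Lam K n q₂) →ₗ[K]
      Lam K n (p₁+p₂) ⊗[K] Lam K n (q₁+q₂) :=
  (TensorProduct.map (mf p₁ p₂) (mf q₁ q₂))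
    ∘ₗ (TensorProduct.tensorTensorTensorComm K (Lam K n p₁) (Lam K n q₁)
        (Lam K n p₂) (Lam K n q₂)).toLinearMap

/-- The map `φ_k = (m ⊗ m) ∘ (1 ⊗ τ ⊗ 1) ∘ (Δ_{a-k,k} ⊗ Δ_{k,b-k}) : Λ^a ⊗ Λ^b → Λ^a ⊗ Λ^b`. -/
def phiSmall (a b k : ℕ) (hka : k ≤ a) (hkb : k ≤ b) :
    Lam K n a ⊗[K] Lam K n b →ₗ[K] Lam K n a ⊗[K] Lam K n b :=
  (TensorProduct.congr (ecast K n (by omega : (a-k) + k = a))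
      (ecast K n (by omega : k + (b-k) = b))).toLinearMap
    ∘ₗ pairMul K n mf (a-k) k k (b-k)
    ∘ₗ (TensorProduct.map
        ((Df (a-k) k) ∘ₗ (ecast K n (by omega : a = (a-k) + k)).toLinearMap)
        ((Df k (b-k)) ∘ₗ (ecast K n (by omega : b = k + (b-k))).toLinearMap))

/-- The map `ψ_k = C(b,k)·1 - φ_k : Λ^a ⊗ Λ^b → Λ^a ⊗ Λ^b`. -/
def psiSmall (a b k : ℕ) (hka : k ≤ a) (hkb : k ≤ b) :
    Lam K n a ⊗[K] Lam K n b →ₗ[K] Lam K n a ⊗[K] Lam K n b :=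
  (Nat.choose b k : K) • LinearMap.id - phiSmall K n mf Df a b k hka hkb

/-- The map `β_k = (m ⊗ m) ∘ (1 ⊗ τ ⊗ 1) ∘ (Δ_{a-k,k} ⊗ 1 ⊗ 1) : Λ^a ⊗ (Λ^k ⊗ Λ^{b-k}) → Λ^a ⊗ Λ^b`. -/
def betaMap (a b k : ℕ) (hka : k ≤ a) (hkb : k ≤ b) :
    Lam K n a ⊗[K] (Lam K n k ⊗[K] Lam K n (b-k)) →ₗ[K] Lam K n a ⊗[K] Lam K n b :=
  (TensorProduct.congr (ecast K n (by omega : (a-k) + k = a))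
      (ecast K n (by omega : k + (b-k) = b))).toLinearMap
    ∘ₗ pairMul K n mf (a-k) k k (b-k)
    ∘ₗ (TensorProduct.map
        ((Df (a-k) k) ∘ₗ (ecast K n (by omega : a = (a-k) + k)).toLinearMap)
        LinearMap.id)

/-- The map `γ_k : Λ^a ⊗ (Λ^k ⊗ Λ^{b-k}) → Λ^a ⊗ Λ^b`,
`γ_k(x ⊗ y ⊗ z) = x ⊗ (y ∧ z) - β_k(x ⊗ y ⊗ z)`. -/
def gammaMap (a b k : ℕ) (hka : k ≤ a) (hkb : k ≤ b) :
    Lam K n a ⊗[K] (Lam K n k ⊗[K] Lam K n (b-k)) →ₗ[K] Lam K n a ⊗[K] Lam K n b :=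
  (TensorProduct.map LinearMap.id
      ((ecast K n (by omega : k + (b-k) = b)).toLinearMap ∘ₗ mf k (b-k)))
    - betaMap K n mf Df a b k hka hkb

/-- The quantity `d_k(a,b,t)` (for the given `i`), from Lemma 5.3 of the paper. -/
def dInt (a b k i t : ℕ) : ℤ :=
  1 - ∑ j ∈ Finset.Icc (i - min (b-k) i) t,
        (-1:ℤ)^j * ((a-k+j).choose (a-k) : ℤ) * ((b-k+t-i).choose (t-j) : ℤ)

end MMS


namespace MMS

section Generic

variable {K : Type*} [Field K] {M : Type*} [AddCommGroup M] [Module K M]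

theorem ι_mul_ιMulti (m : M) {q : ℕ} (w : Fin q → M) :
    ExteriorAlgebra.ι K m * ExteriorAlgebra.ιMulti K q w =
      (-1 : K) ^ q • (ExteriorAlgebra.ιMulti K q w * ExteriorAlgebra.ι K m) := by
  induction q with
  | zero => simp
  | succ q ih =>
    rw [ExteriorAlgebra.ιMulti_succ_apply, ← mul_assoc,
      eq_neg_of_add_eq_zero_left (ExteriorAlgebra.ι_add_mul_swap m (w 0)), neg_mul, mul_assoc, ih,
      mul_smul_comm, pow_succ, mul_neg_one, neg_smul, mul_assoc]

theorem ιMulti_mul_ιMulti_comm {p q : ℕ} (v : Fin p → M) (w : Fin q → M) :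
    ExteriorAlgebra.ιMulti K p v * ExteriorAlgebra.ιMulti K q w =
      (-1 : K) ^ (p * q) •
        (ExteriorAlgebra.ιMulti K q w * ExteriorAlgebra.ιMulti K p v) := by
  induction p with
  | zero => simp
  | succ p ih =>
    rw [ExteriorAlgebra.ιMulti_succ_apply, mul_assoc, ih, mul_smul_comm, ← mul_assoc,
      ι_mul_ιMulti, smul_mul_assoc, smul_smul, mul_assoc, ← pow_add, Nat.succ_mul]

/-- The algebra map `Λ(M) → Λ(M × M)` induced by `v ↦ (α v, β v)`. -/
def pencil (α β : K) : ExteriorAlgebra K M →ₐ[K] ExteriorAlgebra K (M × M) :=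
  ExteriorAlgebra.map ((α • LinearMap.id).prod (β • LinearMap.id))

/-- The algebra endomorphism of `Λ(M × M)` induced by a `2 × 2` matrix of scalars. -/
def mix (p q r s : K) : ExteriorAlgebra K (M × M) →ₐ[K] ExteriorAlgebra K (M × M) :=
  ExteriorAlgebra.map
    ((p • LinearMap.fst K M M + q • LinearMap.snd K M M).prod
      (r • LinearMap.fst K M M + s • LinearMap.snd K M M))

theorem mix_pencil (p q r s α β : K) (x : ExteriorAlgebra K M) :
    mix p q r s (pencil α β x) = pencil (p * α + q * β) (r * α + s * β) x := by
  rw [mix, pencil, pencil, ← AlgHom.comp_apply, ExteriorAlgebra.map_comp_map]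
  congr 2
  ext m <;> simp [add_smul, mul_smul]

/-- The linear map `x ⊗ y ↦ i₁(x) i₂(y)`, identifying `Λ(M) ⊗ Λ(M)` with `Λ(M × M)`. -/
def tensorToProd :
    ExteriorAlgebra K M ⊗[K] ExteriorAlgebra K M →ₗ[K] ExteriorAlgebra K (M × M) :=
  LinearMap.mul' K _ ∘ₗ
    TensorProduct.map (pencil (1 : K) 0).toLinearMap (pencil (0 : K) 1).toLinearMap

theorem tensorToProd_tmul (x y : ExteriorAlgebra K M) :
    tensorToProd (x ⊗ₜ[K] y) = pencil (1 : K) 0 x * pencil (0 : K) 1 y := rfl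

/-- The algebra map from `Λ(M × M)` to the graded tensor square of `Λ(M)`. -/
def prodToTensor : ExteriorAlgebra K (M × M) →ₐ[K]
    GradedTensorProduct K (CliffordAlgebra.evenOdd (0 : QuadraticForm K M))
      (CliffordAlgebra.evenOdd (0 : QuadraticForm K M)) :=
  ExteriorAlgebra.lift K
    ⟨(CliffordAlgebra.ofProd (0 : QuadraticForm K M) (0 : QuadraticForm K M)).toLinearMap ∘ₗ
      CliffordAlgebra.ι _, fun m => by
        rw [LinearMap.comp_apply, AlgHom.toLinearMap_apply, ← map_mul,
          CliffordAlgebra.ι_sq_scalar]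
        simp⟩

theorem prodToTensor_pencil_left (x : ExteriorAlgebra K M) :
    prodToTensor (pencil (1 : K) 0 x) = GradedTensorProduct.includeLeft _ _ x := by
  rw [← AlgHom.comp_apply]
  refine DFunLike.congr_fun (ExteriorAlgebra.hom_ext ?_) x
  ext m
  simp only [LinearMap.comp_apply, AlgHom.toLinearMap_apply, AlgHom.comp_apply, pencil,
    ExteriorAlgebra.map_apply_ι, prodToTensor, ExteriorAlgebra.lift_ι_apply]
  simp

theorem prodToTensor_pencil_right (x : ExteriorAlgebra K M) :
    prodToTensor (pencil (0 : K) 1 x) = GradedTensorProduct.includeRight _ _ x := by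
  rw [← AlgHom.comp_apply]
  refine DFunLike.congr_fun (ExteriorAlgebra.hom_ext ?_) x
  ext m
  simp only [LinearMap.comp_apply, AlgHom.toLinearMap_apply, AlgHom.comp_apply, pencil,
    ExteriorAlgebra.map_apply_ι, prodToTensor, ExteriorAlgebra.lift_ι_apply]
  simp

theorem prodToTensor_tensorToProd (z : ExteriorAlgebra K M ⊗[K] ExteriorAlgebra K M) :
    prodToTensor (tensorToProd z) =
      GradedTensorProduct.of K (CliffordAlgebra.evenOdd (0 : QuadraticForm K M))
        (CliffordAlgebra.evenOdd (0 : QuadraticForm K M)) z := by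
  induction z using TensorProduct.induction_on with
  | zero => simp
  | add x y hx hy => simp only [map_add, hx, hy]
  | tmul x y =>
    rw [tensorToProd_tmul, map_mul, prodToTensor_pencil_left, prodToTensor_pencil_right]
    exact GradedTensorProduct.tmul_one_mul_one_tmul _ _ _ _

theorem tensorToProd_injective : Function.Injective (tensorToProd (K := K) (M := M)) := by
  intro x y h
  have := congrArg prodToTensor h
  rw [prodToTensor_tensorToProd, prodToTensor_tensorToProd] at this
  exact (GradedTensorProduct.of K _ _).injective this

theorem pencil_ιMulti (α β : K) {m : ℕ} (v : Fin m → M) :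
    pencil α β (ExteriorAlgebra.ιMulti K m v) =
      ∑ s : Finset (Fin m), (α ^ s.card * β ^ sᶜ.card) •
        ExteriorAlgebra.ιMulti K m
          (s.piecewise (fun i => (v i, (0 : M))) (fun i => ((0 : M), v i))) := by
  rw [pencil, ExteriorAlgebra.map_apply_ιMulti]
  have h : (⇑((α • LinearMap.id : M →ₗ[K] M).prod (β • LinearMap.id)) ∘ v) =
      (fun i => α • (v i, (0 : M))) + (fun i => β • ((0 : M), v i)) := by
    ext i <;> simp
  rw [h, AlternatingMap.map_add_univ]
  refine Finset.sum_congr rfl fun s _ => ?_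
  have h2 : s.piecewise (fun i => α • (v i, (0 : M))) (fun i => β • ((0 : M), v i)) =
      fun i => s.piecewise (fun _ => α) (fun _ => β) i •
        s.piecewise (fun i => (v i, (0 : M))) (fun i => ((0 : M), v i)) i := by
    ext1 i
    by_cases hi : i ∈ s <;> simp [hi]
  rw [h2]
  refine (MultilinearMap.map_smul_univ
    (ExteriorAlgebra.ιMulti K m (M := M × M)).toMultilinearMap _ _).trans ?_
  rw [Finset.prod_piecewise]
  simp [Finset.compl_eq_univ_sdiff]

theorem sum_filter_exponent_eq [CharZero K] {I : Type*} (s : Finset I) (e : I → ℕ) (x : I → M)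
    (h : ∀ r : K, ∑ i ∈ s, r ^ e i • x i = 0) (k : ℕ) :
    ∑ i ∈ s with e i = k, x i = 0 := by
  rw [← Module.forall_dual_apply_eq_zero_iff K]
  intro l
  have hp : ∑ i ∈ s, Polynomial.C (l (x i)) * Polynomial.X ^ e i = 0 := by
    refine Polynomial.funext fun r => ?_
    have hr := congrArg l (h r)
    simp only [map_sum, map_smul, smul_eq_mul, map_zero] at hr
    simpa only [Polynomial.eval_finsetSum, Polynomial.eval_mul, Polynomial.eval_C,
      Polynomial.eval_pow, Polynomial.eval_X, Polynomial.eval_zero, mul_comm] using hr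
  have hk := congrArg (fun p => Polynomial.coeff p k) hp
  simp only [Polynomial.finsetSum_coeff, Polynomial.coeff_C_mul_X_pow, Polynomial.coeff_zero] at hk
  rw [map_sum, Finset.sum_filter]
  refine Eq.trans ?_ hk
  exact Finset.sum_congr rfl fun i _ => by simp only [eq_comm]

theorem sum_filter_bidegree_eq [CharZero K] {I J : Type*} (s : Finset I) (t : Finset J)
    (e f : I → ℕ) (e' f' : J → ℕ) (x : I → M) (y : J → M)
    (h : ∀ r u : K, ∑ i ∈ s, (r ^ e i * u ^ f i) • x i = ∑ j ∈ t, (r ^ e' j * u ^ f' j) • y j)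
    (k l : ℕ) :
    ∑ i ∈ s with e i = k ∧ f i = l, x i = ∑ j ∈ t with e' j = k ∧ f' j = l, y j := by
  have key := sum_filter_exponent_eq (K := K) ((s.disjSum t).filter fun i => Sum.elim e e' i = k)
    (Sum.elim f f') (Sum.elim x (fun j => - y j)) (fun u => by
      have := sum_filter_exponent_eq (K := K) (s.disjSum t) (Sum.elim e e')
        (fun i => u ^ Sum.elim f f' i • Sum.elim x (fun j => - y j) i) (fun r => by
          simp only [smul_smul]
          rw [Finset.sum_disjSum]
          simpa [← sub_eq_add_neg, sub_eq_zero] using h r u) k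
      exact this) l
  rw [Finset.filter_filter, Finset.sum_filter, Finset.sum_disjSum] at key
  rw [← sub_eq_zero, Finset.sum_filter, Finset.sum_filter, sub_eq_add_neg,
    ← Finset.sum_neg_distrib]
  refine Eq.trans ?_ key
  simp only [Sum.elim_inl, Sum.elim_inr, neg_ite, neg_zero]
  congr!

end Generic

theorem image_castAdd_mem_iff {p q : ℕ} (σ : Equiv.Perm (Fin (p + q))) (i : Fin (p + q)) :
    σ i ∈ Finset.univ.image (fun j : Fin p => σ (Fin.castAdd q j)) ↔ (i : ℕ) < p := by
  simp only [Finset.mem_image, Finset.mem_univ, true_and, σ.injective.eq_iff]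
  constructor
  · rintro ⟨j, rfl⟩
    simp
  · intro h
    exact ⟨⟨i, h⟩, rfl⟩

theorem mem_shuffles_iff {p q : ℕ} (σ : Equiv.Perm (Fin (p + q))) :
    σ ∈ shuffles p q ↔ StrictMono (fun i : Fin p => σ (Fin.castAdd q i)) ∧
      StrictMono (fun i : Fin q => σ (Fin.natAdd p i)) := by
  simp only [shuffles, Finset.mem_filter, Finset.mem_univ, true_and]
  constructor
  · rintro ⟨h1, h2⟩
    refine ⟨fun i j hij => h1 _ _ ?_ ?_, fun i j hij => h2 _ _ ?_ ?_⟩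
    · exact hij
    · simp
    · simpa using hij
    · simp
  · rintro ⟨h1, h2⟩
    refine ⟨fun i j hij hj => ?_, fun i j hij hi => ?_⟩
    · exact h1 (a := ⟨i, lt_trans hij hj⟩) (b := ⟨j, hj⟩) hij
    · have hj : p ≤ (j : ℕ) := hi.trans (le_of_lt hij)
      obtain ⟨i', rfl⟩ : ∃ i', i = Fin.natAdd p i' :=
        ⟨⟨i - p, by omega⟩, by ext; simp; omega⟩
      obtain ⟨j', rfl⟩ : ∃ j', j = Fin.natAdd p j' :=
        ⟨⟨j - p, by omega⟩, by ext; simp; omega⟩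
      exact h2 (by simpa using hij)

theorem sum_card_eq_sum_shuffles {p q : ℕ} {X : Type*} [AddCommMonoid X]
    (g : Finset (Fin (p + q)) → X) :
    ∑ s : Finset (Fin (p + q)) with s.card = p, g s =
      ∑ σ ∈ shuffles p q, g (Finset.univ.image fun j : Fin p => σ (Fin.castAdd q j)) := by
  symm
  refine Finset.sum_bij (fun σ _ => Finset.univ.image fun j : Fin p => σ (Fin.castAdd q j))
    ?_ ?_ ?_ (fun _ _ => rfl)
  · intro σ _
    simp only [Finset.mem_filter, Finset.mem_univ, true_and]
    rw [Finset.card_image_of_injective (f := fun j : Fin p => σ (Fin.castAdd q j)) _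
      (σ.injective.comp (Fin.castAdd_injective p q)), Finset.card_univ, Fintype.card_fin]
  · intro σ hσ τ hτ h
    rw [mem_shuffles_iff] at hσ hτ
    have h1 : (fun i : Fin p => σ (Fin.castAdd q i)) = fun i => τ (Fin.castAdd q i) := by
      refine StrictMono.range_inj hσ.1 hτ.1 |>.1 ?_
      simpa using congrArg (fun s : Finset (Fin (p + q)) => (s : Set (Fin (p + q)))) h
    have hr : ∀ ρ : Equiv.Perm (Fin (p + q)), Set.range (fun i : Fin q => ρ (Fin.natAdd p i)) =
        ((Finset.univ.image fun j : Fin p => ρ (Fin.castAdd q j) : Finset _) :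
          Set (Fin (p + q)))ᶜ := by
      intro ρ
      ext i
      obtain ⟨i, rfl⟩ := ρ.surjective i
      rw [Set.mem_compl_iff, Finset.mem_coe, image_castAdd_mem_iff]
      simp only [Set.mem_range, ρ.injective.eq_iff]
      constructor
      · rintro ⟨j, rfl⟩
        simp
      · intro hi
        exact ⟨⟨i - p, by omega⟩, by ext; simp; omega⟩
    have h2 : (fun i : Fin q => σ (Fin.natAdd p i)) = fun i => τ (Fin.natAdd p i) := by
      refine StrictMono.range_inj hσ.2 hτ.2 |>.1 ?_
      rw [hr, hr, h]
    ext1 i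
    refine Fin.addCases (fun j => ?_) (fun j => ?_) i
    · exact congrFun h1 j
    · exact congrFun h2 j
  · intro s hs
    have hs : s.card = p := by simpa using hs
    have hc : sᶜ.card = q := by simp [Finset.card_compl, hs]
    refine ⟨finSumFinEquiv.symm.trans (finSumEquivOfFinset hs hc), ?_, ?_⟩
    · rw [mem_shuffles_iff]
      constructor
      · intro i j hij
        simpa using hij
      · intro i j hij
        simpa using hij
    · ext i
      rw [← Finset.mem_coe (s := s), ← Finset.range_orderEmbOfFin s hs]
      simp

theorem ιMulti_piecewise_eq_sign_smul {K : Type*} [Field K] {M : Type*} [AddCommGroup M]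
    [Module K M] {p q : ℕ} (f g : Fin (p + q) → M) (σ : Equiv.Perm (Fin (p + q))) :
    ExteriorAlgebra.ιMulti K (p + q)
        ((Finset.univ.image fun j : Fin p => σ (Fin.castAdd q j)).piecewise f g) =
      (Equiv.Perm.sign σ : ℤ) •
        (ExteriorAlgebra.ιMulti K p (fun i => f (σ (Fin.castAdd q i))) *
          ExteriorAlgebra.ιMulti K q (fun i => g (σ (Fin.natAdd p i)))) := by
  rw [ExteriorAlgebra.ιMulti_mul_ιMulti]
  have h : Fin.append (fun i => f (σ (Fin.castAdd q i))) (fun i => g (σ (Fin.natAdd p i))) =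
      (Finset.univ.image fun j : Fin p => σ (Fin.castAdd q j)).piecewise f g ∘ σ := by
    ext1 i
    refine Fin.addCases (fun j => ?_) (fun j => ?_) i
    · rw [Fin.append_left, Function.comp_apply, Finset.piecewise_eq_of_mem]
      rw [image_castAdd_mem_iff]
      simp
    · rw [Fin.append_right, Function.comp_apply, Finset.piecewise_eq_of_notMem]
      rw [image_castAdd_mem_iff]
      simp
  rw [h, AlternatingMap.map_perm, Units.smul_def, smul_smul, ← Units.val_mul, Int.units_mul_self,
    Units.val_one, one_smul]

section Lam

variable {K : Type} [Field K] {n : ℕ}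

theorem coe_ecast {p q : ℕ} (h : p = q) (x : Lam K n p) :
    (ecast K n h x : ExteriorAlgebra K (V K n)) = x := by
  subst h
  rfl

theorem Lam_ext₂ {N : Type*} [AddCommGroup N] [Module K N] {p q : ℕ}
    {f g : Lam K n p →ₗ[K] Lam K n q →ₗ[K] N}
    (h : ∀ v w, f (wedge K n v) (wedge K n w) = g (wedge K n v) (wedge K n w)) : f = g := by
  refine exteriorPower.linearMap_ext ?_
  ext1 v
  refine exteriorPower.linearMap_ext ?_
  ext1 w
  exact h v w

variable (K n) in
/-- The identification of `Λ^p ⊗ Λ^q` with a subspace of `Λ(V × V)`. -/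
def lamToProd (p q : ℕ) :
    Lam K n p ⊗[K] Lam K n q →ₗ[K] ExteriorAlgebra K (V K n × V K n) :=
  tensorToProd ∘ₗ TensorProduct.map (Submodule.subtype _) (Submodule.subtype _)

theorem lamToProd_tmul {p q : ℕ} (x : Lam K n p) (y : Lam K n q) :
    lamToProd K n p q (x ⊗ₜ[K] y) = pencil (1 : K) 0 x.1 * pencil (0 : K) 1 y.1 := rfl

theorem lamToProd_injective (p q : ℕ) : Function.Injective (lamToProd K n p q) := by
  rw [lamToProd, LinearMap.coe_comp]
  exact tensorToProd_injective.comp (TensorProduct.map_injective_of_flat_flat _ _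
    (Submodule.injective_subtype _) (Submodule.injective_subtype _))

theorem lamToProd_congr_ecast {p p' q q' : ℕ} (hp : p = p') (hq : q = q')
    (z : Lam K n p ⊗[K] Lam K n q) :
    lamToProd K n p' q' (TensorProduct.congr (ecast K n hp) (ecast K n hq) z) =
      lamToProd K n p q z := by
  induction z using TensorProduct.induction_on with
  | zero => simp
  | add x y hx hy => simp only [map_add, hx, hy]
  | tmul x y => rw [TensorProduct.congr_tmul, lamToProd_tmul, lamToProd_tmul, coe_ecast, coe_ecast]

theorem IsMulMap.coe_apply {p q : ℕ} {m : Lam K n p ⊗[K] Lam K n q →ₗ[K] Lam K n (p + q)}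
    (hm : IsMulMap K n p q m) (x : Lam K n p) (y : Lam K n q) :
    (m (x ⊗ₜ[K] y) : ExteriorAlgebra K (V K n)) = x.1 * y.1 := by
  have h : (TensorProduct.mk K _ _).compr₂ ((Submodule.subtype _) ∘ₗ m) =
      (LinearMap.mul K (ExteriorAlgebra K (V K n))).compl₁₂ (Submodule.subtype _)
        (Submodule.subtype _) := by
    refine Lam_ext₂ fun v w => ?_
    simp only [LinearMap.compr₂_apply, TensorProduct.mk_apply, LinearMap.comp_apply, hm v w]
    exact (ExteriorAlgebra.ιMulti_mul_ιMulti v w).symm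
  exact LinearMap.congr_fun₂ h x y

theorem pencil_mul_pencil_comm {p q : ℕ} (α β γ δ : K) (x : Lam K n p) (y : Lam K n q) :
    pencil α β x.1 * pencil γ δ y.1 = (-1 : K) ^ (p * q) • (pencil γ δ y.1 * pencil α β x.1) := by
  have h : (LinearMap.mul K (ExteriorAlgebra K (V K n × V K n))).compl₁₂
        ((pencil α β).toLinearMap ∘ₗ (Submodule.subtype (⋀[K]^p (V K n))))
        ((pencil γ δ).toLinearMap ∘ₗ (Submodule.subtype (⋀[K]^q (V K n)))) =
      (-1 : K) ^ (p * q) • (LinearMap.mul K (ExteriorAlgebra K (V K n × V K n))).flip.compl₁₂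
        ((pencil α β).toLinearMap ∘ₗ (Submodule.subtype (⋀[K]^p (V K n))))
        ((pencil γ δ).toLinearMap ∘ₗ (Submodule.subtype (⋀[K]^q (V K n)))) := by
    refine Lam_ext₂ fun v w => ?_
    change pencil α β (ExteriorAlgebra.ιMulti K p v) * pencil γ δ (ExteriorAlgebra.ιMulti K q w) =
      (-1 : K) ^ (p * q) • (pencil γ δ (ExteriorAlgebra.ιMulti K q w) *
        pencil α β (ExteriorAlgebra.ιMulti K p v))
    rw [pencil, pencil, ExteriorAlgebra.map_apply_ιMulti, ExteriorAlgebra.map_apply_ιMulti,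
      ιMulti_mul_ιMulti_comm]
  exact LinearMap.congr_fun₂ h x y

theorem IsComulMap.lamToProd_apply {p q : ℕ}
    {D : Lam K n (p + q) →ₗ[K] Lam K n p ⊗[K] Lam K n q} (hD : IsComulMap K n p q D)
    (v : Fin (p + q) → V K n) :
    lamToProd K n p q (D (wedge K n v)) =
      ∑ s : Finset (Fin (p + q)) with s.card = p, ExteriorAlgebra.ιMulti K (p + q)
          (s.piecewise (fun i => (v i, (0 : V K n))) (fun i => ((0 : V K n), v i))) := by
  rw [hD v, map_sum, sum_card_eq_sum_shuffles]
  refine Finset.sum_congr rfl fun σ _ => ?_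
  rw [ιMulti_piecewise_eq_sign_smul, map_zsmul, lamToProd_tmul]
  simp only [wedge, pencil]
  rw [ExteriorAlgebra.map_apply_ιMulti, ExteriorAlgebra.map_apply_ιMulti]
  congr 3 <;> congr 1 <;> ext <;> simp

/-- The map `Λ^m → Λ(V × V)` given by the component `Δ_{p,q}` of the comultiplication when
`m = p + q`, and by `0` otherwise. -/
def comulToProd (Df : ∀ p q : ℕ, Lam K n (p+q) →ₗ[K] Lam K n p ⊗[K] Lam K n q) (p q m : ℕ) :
    Lam K n m →ₗ[K] ExteriorAlgebra K (V K n × V K n) :=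
  if h : m = p + q then lamToProd K n p q ∘ₗ Df p q ∘ₗ (ecast K n h).toLinearMap else 0

variable {Df : ∀ p q : ℕ, Lam K n (p+q) →ₗ[K] Lam K n p ⊗[K] Lam K n q}

theorem comulToProd_of_eq {p q m : ℕ} (h : m = p + q) (x : Lam K n m) :
    comulToProd Df p q m x = lamToProd K n p q (Df p q (ecast K n h x)) := by
  rw [comulToProd, dif_pos h]
  rfl

theorem pencil_eq_sum_comulToProd (hDf : ∀ p q, IsComulMap K n p q (Df p q)) (α β : K) {m : ℕ}
    (x : Lam K n m) :
    pencil α β x.1 = ∑ pq ∈ Finset.HasAntidiagonal.antidiagonal m,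
      (α ^ pq.1 * β ^ pq.2) • comulToProd Df pq.1 pq.2 m x := by
  have h : (pencil α β).toLinearMap ∘ₗ (Submodule.subtype (⋀[K]^m (V K n))) =
      ∑ pq ∈ Finset.HasAntidiagonal.antidiagonal m,
        (α ^ pq.1 * β ^ pq.2) • comulToProd Df pq.1 pq.2 m := by
    refine exteriorPower.linearMap_ext ?_
    ext1 v
    rw [LinearMap.compAlternatingMap_apply, LinearMap.compAlternatingMap_apply,
      LinearMap.sum_apply]
    refine (pencil_ιMulti α β v).trans ?_
    rw [← Finset.sum_fiberwise_of_maps_to (s := Finset.univ)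
      (t := Finset.HasAntidiagonal.antidiagonal m)
      (g := fun s : Finset (Fin m) => (s.card, sᶜ.card))
      (fun s _ => by simp [Finset.card_add_card_compl])]
    refine Finset.sum_congr rfl fun pq hpq => ?_
    obtain ⟨p, q⟩ := pq
    obtain rfl : p + q = m := by simpa using hpq
    rw [LinearMap.smul_apply, comulToProd_of_eq rfl]
    have := (hDf p q).lamToProd_apply v
    change _ = (α ^ p * β ^ q) • lamToProd K n p q (Df p q (wedge K n v))
    rw [this, Finset.smul_sum]
    refine Finset.sum_congr ?_ ?_
    · ext s
      simp only [Finset.mem_filter, Finset.mem_univ, true_and, Prod.mk.injEq, and_iff_left_iff_imp]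
      intro hs
      simp [Finset.card_compl, hs]
    · intro s hs
      have hs : s.card = p := by simpa using hs
      have hc : sᶜ.card = q := by simp [Finset.card_compl, hs]
      rw [hs, hc]
  simpa using LinearMap.congr_fun h x

variable {mf : ∀ p q : ℕ, Lam K n p ⊗[K] Lam K n q →ₗ[K] Lam K n (p+q)}

theorem pencil_eq_sum_range (hDf : ∀ p q, IsComulMap K n p q (Df p q)) (α β : K) {m : ℕ}
    (x : Lam K n m) :
    pencil α β x.1 = ∑ t ∈ Finset.range (m + 1),
      (α ^ t * β ^ (m - t)) • comulToProd Df t (m - t) m x := by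
  rw [pencil_eq_sum_comulToProd hDf, Finset.Nat.sum_antidiagonal_eq_sum_range_succ_mk]

theorem pencil_eq_sum_range' (hDf : ∀ p q, IsComulMap K n p q (Df p q)) (α β : K) {m : ℕ}
    (x : Lam K n m) :
    pencil α β x.1 = ∑ t ∈ Finset.range (m + 1),
      (α ^ (m - t) * β ^ t) • comulToProd Df (m - t) t m x := by
  rw [pencil_eq_sum_comulToProd hDf, ← Finset.Nat.sum_antidiagonal_swap,
    Finset.Nat.sum_antidiagonal_eq_sum_range_succ_mk]
  rfl

theorem lamToProd_deltaMap (hmf : ∀ p q, IsMulMap K n p q (mf p q)) {a b t : ℕ} (ht : t ≤ b)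
    (x : Lam K n a) (y : Lam K n b) :
    lamToProd K n (a + t) (b - t) (deltaMap K n mf Df a b t ht (x ⊗ₜ[K] y)) =
      pencil (1 : K) 0 x.1 * comulToProd Df t (b - t) b y := by
  rw [comulToProd_of_eq (by omega)]
  simp only [deltaMap, LinearMap.comp_apply, TensorProduct.map_tmul, LinearMap.id_apply,
    LinearEquiv.coe_coe]
  generalize Df t (b - t) _ = w
  induction w using TensorProduct.induction_on with
  | zero => simp
  | add u v hu hv => simp only [TensorProduct.tmul_add, map_add, hu, hv, mul_add]
  | tmul u v =>
    rw [TensorProduct.assoc_symm_tmul, TensorProduct.map_tmul, lamToProd_tmul, lamToProd_tmul,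
      (hmf a t).coe_apply, map_mul, mul_assoc, LinearMap.id_apply]

theorem lamToProd_thetaMap (hmf : ∀ p q, IsMulMap K n p q (mf p q)) {a b t : ℕ} (ht : t ≤ a)
    (x : Lam K n a) (y : Lam K n b) :
    lamToProd K n (a - t) (b + t) (thetaMap K n mf Df a b t ht (x ⊗ₜ[K] y)) =
      comulToProd Df (a - t) t a x * pencil (0 : K) 1 y.1 := by
  rw [comulToProd_of_eq (by omega)]
  simp only [thetaMap, LinearMap.comp_apply, TensorProduct.map_tmul, LinearMap.id_apply,
    LinearEquiv.coe_coe]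
  generalize Df (a - t) t _ = w
  induction w using TensorProduct.induction_on with
  | zero => simp
  | add u v hu hv => simp only [TensorProduct.add_tmul, map_add, hu, hv, add_mul]
  | tmul u v =>
    rw [TensorProduct.assoc_tmul, TensorProduct.map_tmul, lamToProd_tmul, lamToProd_tmul,
      LinearMap.comp_apply, LinearEquiv.coe_coe, coe_ecast, (hmf t b).coe_apply, map_mul,
      mul_assoc, LinearMap.id_apply]

theorem lamToProd_pairMul (hmf : ∀ p q, IsMulMap K n p q (mf p q)) {p₁ q₁ p₂ q₂ : ℕ}
    (u : Lam K n p₁ ⊗[K] Lam K n q₁) (w : Lam K n p₂ ⊗[K] Lam K n q₂) :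
    lamToProd K n (p₁ + p₂) (q₁ + q₂) (pairMul K n mf p₁ q₁ p₂ q₂ (u ⊗ₜ[K] w)) =
      (-1 : K) ^ (p₂ * q₁) • (lamToProd K n p₁ q₁ u * lamToProd K n p₂ q₂ w) := by
  induction u using TensorProduct.induction_on with
  | zero => simp
  | add u v hu hv => simp only [TensorProduct.add_tmul, map_add, hu, hv, add_mul, smul_add]
  | tmul x₁ x₂ =>
    induction w using TensorProduct.induction_on with
    | zero => simp
    | add u v hu hv => simp only [TensorProduct.tmul_add, map_add, hu, hv, mul_add, smul_add]
    | tmul y₁ y₂ =>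
      simp only [pairMul, LinearMap.comp_apply, LinearEquiv.coe_coe,
        TensorProduct.tensorTensorTensorComm_tmul, TensorProduct.map_tmul, lamToProd_tmul,
        (hmf _ _).coe_apply, map_mul]
      rw [mul_assoc, ← mul_assoc (pencil (1 : K) 0 y₁.1),
        pencil_mul_pencil_comm 1 0 0 1 y₁ x₂, smul_mul_assoc, mul_smul_comm]
      simp only [mul_assoc]

theorem lamToProd_phiSmall (hmf : ∀ p q, IsMulMap K n p q (mf p q)) {a b k : ℕ} (hka : k ≤ a)
    (hkb : k ≤ b) (x : Lam K n a) (y : Lam K n b) :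
    lamToProd K n a b (phiSmall K n mf Df a b k hka hkb (x ⊗ₜ[K] y)) =
      (-1 : K) ^ k • (comulToProd Df (a - k) k a x * comulToProd Df k (b - k) b y) := by
  rw [comulToProd_of_eq (by omega), comulToProd_of_eq (by omega)]
  simp only [phiSmall, LinearMap.comp_apply, LinearEquiv.coe_coe, TensorProduct.map_tmul]
  rw [lamToProd_congr_ecast, lamToProd_pairMul hmf]
  congr 1
  rcases Nat.even_or_odd k with h | h
  · rw [(h.mul_right k).neg_one_pow, h.neg_one_pow]
  · rw [(h.mul h).neg_one_pow, h.neg_one_pow]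

/-- The map `θ_t`, followed by the identification of its target with a subspace of `Λ(V × V)`,
and extended by `0` to all `t`. -/
def thetaToProd (mf : ∀ p q : ℕ, Lam K n p ⊗[K] Lam K n q →ₗ[K] Lam K n (p+q))
    (Df : ∀ p q : ℕ, Lam K n (p+q) →ₗ[K] Lam K n p ⊗[K] Lam K n q) (a b t : ℕ) :
    Lam K n a ⊗[K] Lam K n b →ₗ[K] ExteriorAlgebra K (V K n × V K n) :=
  if h : t ≤ a then lamToProd K n (a - t) (b + t) ∘ₗ thetaMap K n mf Df a b t h else 0

/-- The composition `θ_u ∘ δ_t`, followed by the identification of its target with a subspace of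
`Λ(V × V)`, and extended by `0` to all `t` and `u`. -/
def thetaDeltaToProd (mf : ∀ p q : ℕ, Lam K n p ⊗[K] Lam K n q →ₗ[K] Lam K n (p+q))
    (Df : ∀ p q : ℕ, Lam K n (p+q) →ₗ[K] Lam K n p ⊗[K] Lam K n q) (a b t u : ℕ) :
    Lam K n a ⊗[K] Lam K n b →ₗ[K] ExteriorAlgebra K (V K n × V K n) :=
  if h : t ≤ b then thetaToProd mf Df (a + t) (b - t) u ∘ₗ deltaMap K n mf Df a b t h else 0

theorem mix_lamToProd_eq_sum_thetaToProd (hmf : ∀ p q, IsMulMap K n p q (mf p q))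
    (hDf : ∀ p q, IsComulMap K n p q (Df p q)) (r : K) {a b : ℕ}
    (z : Lam K n a ⊗[K] Lam K n b) :
    mix 1 0 r 1 (lamToProd K n a b z) =
      ∑ t ∈ Finset.range (a + 1), r ^ t • thetaToProd mf Df a b t z := by
  induction z using TensorProduct.induction_on with
  | zero => simp
  | add u v hu hv => simp only [map_add, hu, hv, smul_add, Finset.sum_add_distrib]
  | tmul x y =>
    rw [lamToProd_tmul, map_mul, mix_pencil, mix_pencil]
    simp only [mul_one, mul_zero, add_zero, zero_add]
    rw [pencil_eq_sum_range' hDf, Finset.sum_mul]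
    refine Finset.sum_congr rfl fun t ht => ?_
    have ht : t ≤ a := by simpa [Nat.lt_succ_iff] using ht
    rw [thetaToProd, dif_pos ht, LinearMap.comp_apply, lamToProd_thetaMap hmf ht, one_pow, one_mul,
      smul_mul_assoc]

theorem pencil_mul_pencil_eq_sum_thetaDeltaToProd (hmf : ∀ p q, IsMulMap K n p q (mf p q))
    (hDf : ∀ p q, IsComulMap K n p q (Df p q)) (r s c : K) {a b : ℕ} (x : Lam K n a)
    (y : Lam K n b) :
    pencil 1 r x.1 * pencil s (r * s + c) y.1 =
      ∑ t ∈ Finset.range (b + 1), ∑ u ∈ Finset.range (a + t + 1),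
        (s ^ t * c ^ (b - t) * r ^ u) • thetaDeltaToProd mf Df a b t u (x ⊗ₜ[K] y) := by
  have h : pencil 1 r x.1 * pencil s (r * s + c) y.1 =
      mix 1 0 r 1 (pencil 1 0 x.1 * pencil s c y.1) := by
    rw [map_mul, mix_pencil, mix_pencil]
    simp
  rw [h, pencil_eq_sum_range hDf s c y, Finset.mul_sum, map_sum]
  refine Finset.sum_congr rfl fun t ht => ?_
  have ht : t ≤ b := by simpa [Nat.lt_succ_iff] using ht
  rw [mul_smul_comm, map_smul, ← lamToProd_deltaMap hmf ht,
    mix_lamToProd_eq_sum_thetaToProd hmf hDf, Finset.smul_sum]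
  refine Finset.sum_congr rfl fun u _ => ?_
  rw [thetaDeltaToProd, dif_pos ht, LinearMap.comp_apply, smul_smul]

theorem pencil_mul_pencil_eq_sum (hDf : ∀ p q, IsComulMap K n p q (Df p q)) (r s : K) {a b : ℕ}
    (x : Lam K n a) (y : Lam K n b) :
    pencil 1 r x.1 * pencil s 1 y.1 =
      ∑ i ∈ Finset.range (a + 1) ×ˢ Finset.range (b + 1),
        (r ^ i.1 * s ^ i.2) •
          (comulToProd Df (a - i.1) i.1 a x * comulToProd Df i.2 (b - i.2) b y) := by
  rw [pencil_eq_sum_range' hDf, pencil_eq_sum_range hDf, Finset.sum_mul_sum, Finset.sum_product]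
  simp only [one_pow, one_mul, mul_one, smul_mul_assoc, mul_smul_comm, smul_smul,
    mul_comm (s ^ _) (r ^ _)]

theorem thetaDeltaToProd_self {a b t : ℕ} (hta : t ≤ a) (htb : t ≤ b)
    (z : Lam K n a ⊗[K] Lam K n b) :
    thetaDeltaToProd mf Df a b t t z = lamToProd K n a b (PhiMap' K n mf Df a b t z) := by
  rw [thetaDeltaToProd, dif_pos htb, LinearMap.comp_apply, thetaToProd,
    dif_pos (Nat.le_add_left t a), LinearMap.comp_apply, PhiMap', dif_pos ⟨hta, htb⟩, PhiMap,
    LinearMap.comp_apply, LinearMap.comp_apply, LinearEquiv.coe_coe, lamToProd_congr_ecast]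

theorem PhiMap'_zero (hmf : ∀ p q, IsMulMap K n p q (mf p q))
    (hDf : ∀ p q, IsComulMap K n p q (Df p q)) (a b : ℕ) :
    PhiMap' K n mf Df a b 0 = LinearMap.id := by
  refine TensorProduct.ext' fun x y => lamToProd_injective a b ?_
  rw [← thetaDeltaToProd_self (Nat.zero_le a) (Nat.zero_le b), LinearMap.id_apply, lamToProd_tmul]
  have h := pencil_mul_pencil_eq_sum_thetaDeltaToProd hmf hDf 0 0 1 x y
  rw [Finset.sum_eq_single_of_mem 0 (by simp) (fun t _ ht => by simp [ht]),
    Finset.sum_eq_single_of_mem 0 (by simp) (fun t _ ht => by simp [ht])] at h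
  simpa using h.symm

theorem phiSmall_eq_sum_PhiMap' [CharZero K] (hmf : ∀ p q, IsMulMap K n p q (mf p q))
    (hDf : ∀ p q, IsComulMap K n p q (Df p q)) {a b k : ℕ} (hka : k ≤ a) (hkb : k ≤ b) :
    phiSmall K n mf Df a b k hka hkb =
      ∑ t ∈ Finset.range (k+1),
        ((-1:K)^t * ((b-t).choose (k-t) : K)) • PhiMap' K n mf Df a b t := by
  refine TensorProduct.ext' fun x y => lamToProd_injective a b ?_
  have h := sum_filter_bidegree_eq (K := K) (Finset.range (a + 1) ×ˢ Finset.range (b + 1))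
    ((Finset.range (b + 1)).sigma fun t => Finset.range (a + t + 1) ×ˢ Finset.range (b - t + 1))
    (fun i => i.1) (fun i => i.2) (fun j => j.2.1 + j.2.2) (fun j => j.1 + j.2.2)
    (fun i => comulToProd Df (a - i.1) i.1 a x * comulToProd Df i.2 (b - i.2) b y)
    (fun j => ((-1 : K) ^ j.2.2 * ((b - j.1).choose j.2.2 : K)) •
      thetaDeltaToProd mf Df a b j.1 j.2.1 (x ⊗ₜ[K] y))
    (fun r s => by
      rw [← pencil_mul_pencil_eq_sum hDf]
      have h1 : pencil s 1 y.1 = pencil s (r * s + (1 - r * s)) y.1 := by ring_nf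
      rw [h1, pencil_mul_pencil_eq_sum_thetaDeltaToProd hmf hDf, Finset.sum_sigma]
      refine Finset.sum_congr rfl fun t _ => ?_
      rw [Finset.sum_product]
      refine Finset.sum_congr rfl fun u _ => ?_
      simp only [smul_smul]
      rw [← Finset.sum_smul]
      congr 1
      rw [sub_eq_add_neg, add_comm, add_pow, Finset.mul_sum, Finset.sum_mul]
      refine Finset.sum_congr rfl fun m _ => ?_
      rw [neg_pow, mul_pow, one_pow, pow_add, pow_add]
      ring) k k
  have hl : ((Finset.range (a + 1) ×ˢ Finset.range (b + 1)).filter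
      fun i => i.1 = k ∧ i.2 = k) = {(k, k)} := by
    ext ⟨i, j⟩
    simp only [Finset.mem_filter, Finset.mem_product, Finset.mem_range, Finset.mem_singleton,
      Prod.mk.injEq]
    omega
  rw [hl, Finset.sum_singleton] at h
  rw [lamToProd_phiSmall hmf hka hkb, h, Finset.smul_sum, LinearMap.sum_apply, map_sum]
  refine Finset.sum_bij' (fun j _ => j.1) (fun t _ => ⟨t, (t, k - t)⟩) ?_ ?_ ?_ ?_ ?_
  · rintro ⟨t, u, m⟩ hj
    simp only [Finset.mem_filter, Finset.mem_sigma, Finset.mem_product, Finset.mem_range] at hj ⊢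
    omega
  · intro t ht
    simp only [Finset.mem_filter, Finset.mem_sigma, Finset.mem_product, Finset.mem_range] at ht ⊢
    omega
  · rintro ⟨t, u, m⟩ hj
    simp only [Finset.mem_filter, Finset.mem_sigma, Finset.mem_product, Finset.mem_range] at hj
    obtain rfl : t = u := by omega
    obtain rfl : m = k - t := by omega
    rfl
  · intro t _
    rfl
  · rintro ⟨t, u, m⟩ hj
    simp only [Finset.mem_filter, Finset.mem_sigma, Finset.mem_product, Finset.mem_range] at hj
    obtain rfl : t = u := by omega
    obtain rfl : k = t + m := by omega
    simp only
    rw [thetaDeltaToProd_self (by omega) (by omega), LinearMap.smul_apply, map_smul, smul_smul,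
      Nat.add_sub_cancel_left, ← mul_assoc, pow_add, mul_assoc ((-1 : K) ^ t), ← mul_pow]
    simp

end Lam

/-- Lemma 4.3 of the paper: `φ_k = Σ_{t=0}^{k} (−1)^t C(b−t,k−t)·Φ_t` and
`ψ_k = Σ_{t=1}^{k} (−1)^{t−1} C(b−t,k−t)·Φ_t`. -/
theorem statement7 (K : Type) [Field K] [CharZero K] (n : ℕ) (a b k : ℕ)
    (hba : b ≤ a) (hk1 : 1 ≤ k) (hkb : k ≤ b)
    (mf : ∀ p q : ℕ, Lam K n p ⊗[K] Lam K n q →ₗ[K] Lam K n (p+q))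
    (Df : ∀ p q : ℕ, Lam K n (p+q) →ₗ[K] Lam K n p ⊗[K] Lam K n q)
    (hmf : ∀ p q, IsMulMap K n p q (mf p q))
    (hDf : ∀ p q, IsComulMap K n p q (Df p q)) :
    phiSmall K n mf Df a b k (hkb.trans hba) hkb =
      ∑ t ∈ Finset.range (k+1),
        ((-1:K)^t * ((b-t).choose (k-t) : K)) • PhiMap' K n mf Df a b t ∧
    psiSmall K n mf Df a b k (hkb.trans hba) hkb =
      ∑ t ∈ Finset.Icc 1 k,
        ((-1:K)^(t-1) * ((b-t).choose (k-t) : K)) • PhiMap' K n mf Df a b t := by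
  have hphi := phiSmall_eq_sum_PhiMap' hmf hDf (hkb.trans hba) hkb
  refine ⟨hphi, ?_⟩
  rw [psiSmall, hphi, Finset.range_eq_Ico, Finset.sum_eq_sum_Ico_succ_bot (Nat.succ_pos k),
    PhiMap'_zero hmf hDf, ← sub_sub]
  simp only [pow_zero, one_mul, Nat.sub_zero, sub_self, zero_sub]
  rw [← Finset.sum_neg_distrib]
  refine Finset.sum_congr rfl fun t ht => ?_
  obtain ⟨t, rfl⟩ : ∃ u, t = u + 1 := ⟨t - 1, by simp at ht; omega⟩
  rw [Nat.add_sub_cancel, pow_succ, mul_neg_one, neg_mul]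
  module

end MMS
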